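/- arXiv:1909.03874 — 2 statements merged into one kernel-verified Lean document; each statement's English description precedes it below -/
import Mathlib

section
/- Let λ be a partition with degree vector n_1 > … > n_ℓ, let p be the number of odd entries and q the number of even entries of the degree vector, set k = p − q if p ≥ q and k = q − p − 1 otherwise, and m = k(k+1)/2. Then the coefficient of X^m in He_λ satisfies |coeff_m(He_λ)| · ∏_{i=1}^{k} (2i−1)^{k+1−i} = H_odd(λ), i.e. the absolute value of the constant term of the remainder polynomial equals H_odd(λ)/H(δ_k), where δ_k = (k, k−1, …, 2, 1) is the staircase partition and H(δ_k) = ∏_{i=1}^{k} (2i−1)^{k+1−i} is the product of its hook lengths. -/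
/-- A partition: a weakly decreasing list of positive integers. -/
def IsPartition (l : List ℕ) : Prop :=
  l.Pairwise (· ≥ ·) ∧ ∀ x ∈ l, 0 < x

/-- The degree vector of a partition: `n_i = λ_i + ℓ(λ) − i` (here `i` is 0-indexed). -/
def degVec (l : List ℕ) (i : Fin l.length) : ℕ :=
  l.get i + (l.length - 1 - (i : ℕ))

/-- The Vandermonde determinant `Δ(n_λ) = ∏_{i<j} (n_j − n_i)` of the degree vector. -/
noncomputable def vanderQ (l : List ℕ) : ℚ :=
  ∏ i : Fin l.length, ∏ j : Fin l.length,
    if (i : ℕ) < (j : ℕ) then ((degVec l j : ℚ) - (degVec l i : ℚ)) else 1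

/-- The Wronskian Hermite polynomial `He_λ = Wr[He_{n_1},…,He_{n_ℓ}] / Δ(n_λ)`. -/
noncomputable def HeW (l : List ℕ) : Polynomial ℚ :=
  Polynomial.C (vanderQ l)⁻¹ *
    (Matrix.of fun i j : Fin l.length =>
      (⇑Polynomial.derivative)^[(i : ℕ)]
        ((Polynomial.hermite (degVec l j)).map (Int.castRingHom ℚ))).det

/-- The number of odd entries of the degree vector. -/
def oddCount (l : List ℕ) : ℕ :=
  (Finset.univ.filter fun i : Fin l.length => Odd (degVec l i)).card

/-- The number of even entries of the degree vector. -/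
def evenCount (l : List ℕ) : ℕ :=
  (Finset.univ.filter fun i : Fin l.length => Even (degVec l i)).card

/-- `k = p − q` if `p ≥ q`, and `k = q − p − 1` otherwise. -/
def coreK (l : List ℕ) : ℕ :=
  if evenCount l ≤ oddCount l then oddCount l - evenCount l
  else evenCount l - oddCount l - 1

/-- The conjugate partition entry `λ'_j = #{i : λ_i ≥ j}`. -/
def conjPart (l : List ℕ) (j : ℕ) : ℕ :=
  (l.filter fun a => decide (j ≤ a)).length

/-- The hook length of the cell in (0-indexed) row `i` and (1-indexed) column `j`:
`h(i,j) = (λ_i − j) + (λ'_j − i) + 1`. -/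
def hookLen (l : List ℕ) (i : Fin l.length) (j : ℕ) : ℕ :=
  (l.get i - j) + (conjPart l j - ((i : ℕ) + 1)) + 1

/-- The product of all odd hook lengths of the partition. -/
def Hodd (l : List ℕ) : ℕ :=
  ∏ i : Fin l.length, ∏ j ∈ Finset.Icc 1 (l.get i),
    if Odd (hookLen l i j) then hookLen l i j else 1

/-- The product of the hook lengths of the staircase partition `(k,k−1,…,2,1)`:
`H(δ_k) = ∏_{i=1}^{k} (2i−1)^{k+1−i}`. -/
def Hstaircase (k : ℕ) : ℕ :=
  ∏ i ∈ Finset.Icc 1 k, (2 * i - 1) ^ (k + 1 - i)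

/-!
After multiplication by `X ^ (0 + 1 + ⋯ + (ℓ - 1))`, the Wronskian of `P_1, …, P_ℓ` expands by
multilinearity into a sum over the choices of one monomial from each `P_j`, weighted by the
Vandermonde determinant of the chosen exponents; only distinct exponents contribute. Since `He_n`
has the parity of `n`, the `q` even and `p` odd degrees select `q` distinct even and `p` distinct
odd exponents. The least possible sum of exponents is reached only at the permutations of
`0, 2, …, 2q - 2, 1, 3, …, 2p - 1`, and this is what lands in degree `m`. Hence the coefficient of
`X ^ m` in the Wronskian is the Vandermonde determinant of these exponents times a determinant of
Hermite coefficients for each parity. The coefficient of `X ^ (2r + ε)` in `He_{2a + ε}` is, up to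
factors depending on `a` only or on `r` only, the falling factorial `a (a - 1) ⋯ (a - r + 1)`, so
these two determinants are Vandermonde determinants as well.

On the other side, the hook lengths in row `i` are `1, …, n_i` with the differences `n_i - n_t`,
`t > i`, left out. So `H_odd(λ)` is the product of the odd numbers up to each `n_i`, divided by the
part of `Δ(n_λ)` that pairs degrees of opposite parity. The same cancellation for the exponents
`0, 2, …, 2q - 2, 1, 3, …, 2p - 1` produces `H(δ_k)`.
-/

open Finset Polynomial
open scoped Nat

/-- The absolute value `∏_{i<j} |v j - v i|` of the Vandermonde determinant of a tuple of natural
numbers. -/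
def vandermondeAbs {n : ℕ} (v : Fin n → ℕ) : ℕ :=
  ∏ i, ∏ j ∈ Ioi i, Nat.dist (v i) (v j)

theorem intCast_dist (m n : ℕ) : (Nat.dist m n : ℤ) = |(m : ℤ) - n| := by
  rcases le_total m n with h | h
  · rw [Nat.dist_eq_sub_of_le h, Nat.cast_sub h, abs_sub_comm, abs_of_nonneg (by simpa using h)]
  · rw [Nat.dist_eq_sub_of_le_right h, Nat.cast_sub h, abs_of_nonneg (by simpa using h)]

theorem abs_det_vandermonde_natCast {n : ℕ} (v : Fin n → ℕ) :
    |(Matrix.vandermonde fun i => (v i : ℤ)).det| = vandermondeAbs v := by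
  simp [Matrix.det_vandermonde, vandermondeAbs, abs_prod, intCast_dist, abs_sub_comm]

theorem vandermondeAbs_ne_zero {n : ℕ} {v : Fin n → ℕ} (hv : Function.Injective v) :
    vandermondeAbs v ≠ 0 :=
  prod_ne_zero_iff.mpr fun _ _ => prod_ne_zero_iff.mpr fun _ hj =>
    (Nat.dist_pos_of_ne (hv.ne (mem_Ioi.mp hj).ne)).ne'

/-! ### Odd factorials and staircases -/

/-- The product of the odd natural numbers up to `n`. -/
def oddFactorial (n : ℕ) : ℕ :=
  ∏ h ∈ Icc 1 n, if Odd h then h else 1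

@[simp]
theorem oddFactorial_zero : oddFactorial 0 = 1 := rfl

theorem oddFactorial_succ (n : ℕ) :
    oddFactorial (n + 1) = oddFactorial n * if Odd (n + 1) then n + 1 else 1 :=
  prod_Icc_succ_top (Nat.le_add_left 1 n) _

theorem oddFactorial_two_mul_add_one (a : ℕ) :
    oddFactorial (2 * a + 1) = oddFactorial (2 * a) * (2 * a + 1) := by
  rw [oddFactorial_succ, if_pos (odd_two_mul_add_one a)]

theorem oddFactorial_two_mul_succ (a : ℕ) :
    oddFactorial (2 * (a + 1)) = oddFactorial (2 * a + 1) := by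
  rw [Nat.mul_succ, oddFactorial_succ, if_neg (by simp [parity_simps]), mul_one]

theorem factorial_two_mul (a : ℕ) : (2 * a)! = 2 ^ a * a ! * oddFactorial (2 * a) := by
  induction a with
  | zero => rfl
  | succ a ih =>
    rw [oddFactorial_two_mul_succ, oddFactorial_two_mul_add_one, Nat.mul_succ, Nat.factorial_succ,
      Nat.factorial_succ, ih, Nat.factorial_succ]
    ring

theorem factorial_two_mul_add_one (a : ℕ) :
    (2 * a + 1)! = 2 ^ a * a ! * oddFactorial (2 * a + 1) := by
  rw [oddFactorial_two_mul_add_one, Nat.factorial_succ, factorial_two_mul]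
  ring

theorem factorial_two_mul_add {ε : ℕ} (hε : ε < 2) (a : ℕ) :
    (2 * a + ε)! = 2 ^ a * a ! * oddFactorial (2 * a + ε) := by
  interval_cases ε
  · exact factorial_two_mul a
  · exact factorial_two_mul_add_one a

theorem prod_odd_eq_oddFactorial (n : ℕ) :
    ∏ i : Fin n, (2 * (i : ℕ) + 1) = oddFactorial (2 * n) := by
  induction n with
  | zero => rfl
  | succ n ih =>
    simp [Fin.prod_univ_castSucc, ih, oddFactorial_two_mul_succ, oddFactorial_two_mul_add_one]

theorem Hstaircase_succ (k : ℕ) :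
    Hstaircase (k + 1) = Hstaircase k * oddFactorial (2 * k + 1) := by
  have hrow : ∏ i ∈ Icc 1 (k + 1), (2 * i - 1) = oddFactorial (2 * k + 1) := by
    rw [← oddFactorial_two_mul_succ, ← prod_odd_eq_oddFactorial,
      Fin.prod_univ_eq_prod_range fun i => 2 * i + 1, ← Ico_add_one_right_eq_Icc,
      prod_Ico_eq_prod_range]
    exact prod_congr rfl fun i _ => by lia
  have hext : Hstaircase k = ∏ i ∈ Icc 1 (k + 1), (2 * i - 1) ^ (k + 1 - i) := by
    rw [prod_Icc_succ_top (Nat.le_add_left 1 k), Nat.sub_self, pow_zero, mul_one, Hstaircase]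
  rw [← hrow, hext, Hstaircase, ← prod_mul_distrib]
  refine prod_congr rfl fun i hi => ?_
  rw [← pow_succ, Nat.sub_add_comm (mem_Icc.mp hi).2]

theorem Hstaircase_eq_prod_oddFactorial (k : ℕ) :
    Hstaircase k = ∏ s : Fin k, oddFactorial (2 * s + 1) := by
  induction k with
  | zero => rfl
  | succ k ih => simp [Fin.prod_univ_castSucc, Hstaircase_succ, ih]

/-- The index `k` of the staircase attached to a set of `q` even and `p` odd numbers: cancelling
even against odd numbers in pairs leaves either `k` odd or `k + 1` even ones. -/
def staircaseIndex : ℕ → ℕ → ℕ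
  | 0, p => p
  | q + 1, 0 => q
  | q + 1, p + 1 => staircaseIndex q p

theorem staircaseIndex_eq_ite (q p : ℕ) :
    staircaseIndex q p = if q ≤ p then p - q else q - p - 1 := by
  fun_induction staircaseIndex q p <;> grind

theorem coreK_eq_staircaseIndex (l : List ℕ) :
    coreK l = staircaseIndex (evenCount l) (oddCount l) :=
  (staircaseIndex_eq_ite _ _).symm

theorem dist_even_odd_succ (r s : ℕ) :
    Nat.dist (2 * (r + 1)) (2 * (s + 1) + 1) = Nat.dist (2 * r) (2 * s + 1) := by
  unfold Nat.dist
  lia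

theorem prod_dist_border (q p : ℕ) :
    (∏ s : Fin (p + 1), Nat.dist (2 * q) (2 * s + 1)) * ∏ r : Fin q, Nat.dist (2 * r) (2 * p + 1) =
      oddFactorial (2 * q) * oddFactorial (2 * p + 1) := by
  induction q generalizing p with
  | zero => simp [Nat.dist_zero_left, prod_odd_eq_oddFactorial, oddFactorial_two_mul_succ]
  | succ q ih =>
    have hrow (r : ℕ) : Nat.dist (2 * (r + 1)) 1 = 2 * r + 1 := by
      unfold Nat.dist
      lia
    cases p with
    | zero =>
      have hcol : ∏ r : Fin (q + 1), Nat.dist (2 * r) 1 = oddFactorial (2 * q) := by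
        simp [Fin.prod_univ_succ, hrow, prod_odd_eq_oddFactorial, Nat.dist_zero_left]
      simp [hcol, hrow, oddFactorial_two_mul_succ, oddFactorial_two_mul_add_one,
        mul_comm (2 * q + 1), oddFactorial_succ 0]
    | succ p =>
      rw [Fin.prod_univ_succ, Fin.prod_univ_succ (n := q)]
      simp only [Fin.val_succ, Fin.val_zero, mul_zero, zero_add, dist_even_odd_succ, hrow,
        Nat.dist_zero_left, oddFactorial_two_mul_succ q, oddFactorial_two_mul_add_one q,
        oddFactorial_two_mul_add_one (p + 1), oddFactorial_two_mul_succ p]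
      linear_combination (2 * q + 1) * (2 * (p + 1) + 1) * ih p

theorem prod_dist_mul_Hstaircase (q p : ℕ) :
    (∏ r : Fin q, ∏ s : Fin p, Nat.dist (2 * r) (2 * s + 1)) * Hstaircase (staircaseIndex q p) =
      (∏ r : Fin q, oddFactorial (2 * r)) * ∏ s : Fin p, oddFactorial (2 * s + 1) := by
  fun_induction staircaseIndex q p with
  | case1 p => simp [Hstaircase_eq_prod_oddFactorial]
  | case2 q =>
    simp [Hstaircase_eq_prod_oddFactorial, Fin.prod_univ_succ, oddFactorial_two_mul_succ]
  | case3 q p ih =>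
    have hsplit : ∏ r : Fin (q + 1), ∏ s : Fin (p + 1), Nat.dist (2 * r) (2 * s + 1) =
        (∏ r : Fin q, ∏ s : Fin p, Nat.dist (2 * r) (2 * s + 1)) *
          ((∏ s : Fin (p + 1), Nat.dist (2 * q) (2 * s + 1)) *
            ∏ r : Fin q, Nat.dist (2 * r) (2 * p + 1)) := by
      simp only [Fin.prod_univ_castSucc, Fin.val_castSucc, Fin.val_last, prod_mul_distrib]
      ring
    rw [hsplit, prod_dist_border, mul_right_comm, ih]
    simp only [Fin.prod_univ_castSucc, Fin.val_castSucc, Fin.val_last]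
    ring

/-- The tuple with even entries `2 a_r` on the left summand and odd entries `2 b_s + 1` on the right
one. -/
def evenOdd {α β : Type*} (a : α → ℕ) (b : β → ℕ) : α ⊕ β → ℕ :=
  Sum.elim (fun r => 2 * a r) fun s => 2 * b s + 1

/-- The `q` smallest even and the `p` smallest odd natural numbers: the degree vector of the
staircase `δ_k` with `k = staircaseIndex q p`, up to order and trailing zero parts. -/
def minExponents (q p : ℕ) : Fin q ⊕ Fin p → ℕ :=
  evenOdd Fin.val Fin.val

theorem sum_minExponents (q p : ℕ) :
    staircaseIndex q p * (staircaseIndex q p + 1) / 2 + ∑ i : Fin (q + p), (i : ℕ) =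
      ∑ x, minExponents q p x := by
  have hsum (n : ℕ) : n * (n + 1) / 2 = ∑ i ∈ range (n + 1), i := by
    rw [sum_range_id, Nat.add_sub_cancel, mul_comm]
  have hdouble (n : ℕ) : ∑ i ∈ range n, 2 * i = 2 * ∑ i ∈ range n, i := (mul_sum ..).symm
  simp only [hsum, minExponents, evenOdd, Fintype.sum_sum_type, Sum.elim_inl, Sum.elim_inr,
    Fin.sum_univ_eq_sum_range fun i => i, Fin.sum_univ_eq_sum_range fun i => 2 * i,
    Fin.sum_univ_eq_sum_range fun i => 2 * i + 1]
  fun_induction staircaseIndex q p with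
  | case1 p =>
    simp only [sum_range_succ, sum_add_distrib, hdouble, range_zero, sum_empty, sum_const,
      card_range, smul_eq_mul, zero_add]
    ring
  | case2 q =>
    simp only [sum_range_succ, hdouble, range_zero, sum_empty]
    ring
  | case3 q p ih =>
    rw [show q + 1 + (p + 1) = q + p + 1 + 1 by ring, sum_range_succ _ (q + p + 1),
      sum_range_succ _ (q + p), sum_range_succ _ q, sum_range_succ _ p]
    linear_combination ih

/-! ### Products over pairs -/

section ProdPairs

variable {M : Type*} [CommMonoid M]

theorem prod_prod_Ioi_eq_prod_sym2 {ι : Type*} [Fintype ι] [LinearOrder ι]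
    [LocallyFiniteOrderTop ι] (G : ι → ι → M) (hG : ∀ i j, G i j = G j i) :
    ∏ i, ∏ j ∈ Ioi i, G i j = ∏ z : Sym2 ι with ¬ z.IsDiag, Sym2.lift ⟨G, hG⟩ z := by
  have hsym2 := sum_sym2_filter_not_isDiag (M := Additive M) univ (Sym2.lift ⟨G, hG⟩)
  rw [sym2_univ] at hsym2
  refine Eq.trans ?_ hsym2.symm
  rw [prod_sigma']
  exact prod_nbij' (fun x => (x.1, x.2)) (fun x => ⟨x.1, x.2⟩) (by simp +contextual [ne_of_lt])
    (by simp) (by simp) (by simp) (by simp)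

theorem prod_prod_Ioi_comp_equiv {ι κ : Type*} [Fintype ι] [LinearOrder ι]
    [LocallyFiniteOrderTop ι] [Fintype κ] [LinearOrder κ] [LocallyFiniteOrderTop κ]
    (e : ι ≃ κ) (G : κ → κ → M) (hG : ∀ i j, G i j = G j i) :
    ∏ i, ∏ j ∈ Ioi i, G (e i) (e j) = ∏ i, ∏ j ∈ Ioi i, G i j := by
  rw [prod_prod_Ioi_eq_prod_sym2 (fun i j => G (e i) (e j)) fun i j => hG _ _,
    prod_prod_Ioi_eq_prod_sym2 G hG]
  refine prod_nbij' (Sym2.map e) (Sym2.map e.symm) ?_ ?_ ?_ ?_ ?_ <;>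
    simp [Sym2.forall, Sym2.map_map]

theorem prod_prod_Ioi_sumEquiv {α β ι : Type*} [Fintype α] [LinearOrder α]
    [LocallyFiniteOrderTop α] [Fintype β] [LinearOrder β] [LocallyFiniteOrderTop β]
    [Fintype ι] [LinearOrder ι] [LocallyFiniteOrderTop ι]
    (θ : α ⊕ β ≃ ι) (G : ι → ι → M) (hG : ∀ i j, G i j = G j i) :
    ∏ i, ∏ j ∈ Ioi i, G i j =
      (∏ a, ∏ a' ∈ Ioi a, G (θ (.inl a)) (θ (.inl a'))) *
      (∏ b, ∏ b' ∈ Ioi b, G (θ (.inr b)) (θ (.inr b'))) *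
      ∏ a, ∏ b, G (θ (.inl a)) (θ (.inr b)) := by
  rw [← prod_prod_Ioi_comp_equiv (ofLex.trans θ) G hG, ← toLex.prod_comp, Fintype.prod_sum_type]
  simp [Sum.Lex.Ioi_inl, Sum.Lex.Ioi_inr, prod_disjSum, prod_mul_distrib, mul_right_comm]

end ProdPairs

/-! ### Hook lengths and the degree vector -/

theorem lt_conjPart_iff {l : List ℕ} (hl : l.Pairwise (· ≥ ·)) (j : ℕ) {t : ℕ}
    (ht : t < l.length) : t < conjPart l j ↔ j ≤ l[t] := by
  induction l generalizing t with
  | nil => simp at ht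
  | cons a l ih =>
    obtain ⟨ha, hl⟩ := List.pairwise_cons.mp hl
    by_cases hj : j ≤ a
    · have hcons : conjPart (a :: l) j = conjPart l j + 1 := by simp [conjPart, hj]
      cases t with
      | zero => simp [hcons, hj]
      | succ t => simpa [hcons] using ih hl (Nat.lt_of_succ_lt_succ ht)
    · have hle : ∀ x ∈ a :: l, x ≤ a := List.forall_mem_cons.mpr ⟨le_rfl, ha⟩
      have hlt : ∀ x ∈ a :: l, x < j := fun x hx => (hle x hx).trans_lt (not_le.mp hj)
      have hcons : conjPart (a :: l) j = 0 := by
        simpa [conjPart, List.filter_eq_nil_iff] using hlt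
      simpa [hcons] using hlt _ (List.getElem_mem ht)

theorem conjPart_le_length (l : List ℕ) (j : ℕ) : conjPart l j ≤ l.length :=
  List.length_filter_le _ _

theorem conjPart_antitone (l : List ℕ) : Antitone (conjPart l) := fun j j' hjj' =>
  (List.monotone_filter_right l fun a ha => by grind).length_le

theorem degVec_strictAnti {l : List ℕ} (hl : l.Pairwise (· ≥ ·)) : StrictAnti (degVec l) := by
  intro i t hit
  have hget := List.pairwise_iff_get.mp hl i t hit
  unfold degVec
  lia

theorem hookLen_strictAntiOn {l : List ℕ} (hl : l.Pairwise (· ≥ ·)) (i : Fin l.length) :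
    StrictAntiOn (hookLen l i) (Icc 1 (l.get i)) := by
  intro j hj j' hj' hjj'
  rw [mem_coe, mem_Icc] at hj hj'
  have hrow := (lt_conjPart_iff hl j' i.isLt).mpr hj'.2
  have hcol := conjPart_antitone l hjj'.le
  unfold hookLen
  lia

theorem hookLen_mem_Icc (l : List ℕ) (i : Fin l.length) {j : ℕ} (hj : j ∈ Icc 1 (l.get i)) :
    hookLen l i j ∈ Icc 1 (degVec l i) := by
  have hcol := conjPart_le_length l j
  rw [mem_Icc] at hj ⊢
  unfold hookLen degVec
  lia

theorem hookLen_add_degVec_ne {l : List ℕ} (hl : l.Pairwise (· ≥ ·)) {i t : Fin l.length}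
    (hit : i < t) {j : ℕ} (hj : j ∈ Icc 1 (l.get i)) : hookLen l i j + degVec l t ≠ degVec l i := by
  have hrow := (lt_conjPart_iff hl j i.isLt).mpr (mem_Icc.mp hj).2
  have hget := List.pairwise_iff_get.mp hl i t hit
  have hconj := lt_conjPart_iff hl j t.isLt
  rw [mem_Icc] at hj
  unfold hookLen degVec
  grind

theorem prod_hookLen_mul_prod_sub {M : Type*} [CommMonoid M] {l : List ℕ}
    (hl : l.Pairwise (· ≥ ·)) (i : Fin l.length) (g : ℕ → M) :
    (∏ j ∈ Icc 1 (l.get i), g (hookLen l i j)) * ∏ t ∈ Ioi i, g (degVec l i - degVec l t) =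
      ∏ h ∈ Icc 1 (degVec l i), g h := by
  have hanti := degVec_strictAnti hl
  have hhook : Set.InjOn (hookLen l i) (Icc 1 (l.get i)) := (hookLen_strictAntiOn hl i).injOn
  have hdiff : Set.InjOn (fun t => degVec l i - degVec l t) (Ioi i) := fun t ht t' ht' h =>
    hanti.injective (by
      have := hanti (mem_Ioi.mp ht)
      have := hanti (mem_Ioi.mp ht')
      grind)
  have hdisj : Disjoint ((Icc 1 (l.get i)).image (hookLen l i))
      ((Ioi i).image fun t => degVec l i - degVec l t) := by
    simp only [disjoint_left, mem_image, not_exists, not_and, mem_Ioi]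
    rintro _ ⟨j, hj, rfl⟩ t hit h
    exact hookLen_add_degVec_ne hl hit hj (by grind [hanti hit])
  rw [← prod_image hhook, ← prod_image hdiff, ← prod_union hdisj]
  congr 1
  refine eq_of_subset_of_card_le (union_subset ?_ ?_) ?_
  · exact image_subset_iff.mpr fun j hj => hookLen_mem_Icc l i hj
  · refine image_subset_iff.mpr fun t ht => mem_Icc.mpr ⟨?_, Nat.sub_le _ _⟩
    exact Nat.sub_pos_of_lt (hanti (mem_Ioi.mp ht))
  · rw [card_union_of_disjoint hdisj, card_image_of_injOn hhook, card_image_of_injOn hdiff]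
    simp [degVec]

theorem Hodd_mul_prod_odd_sub {l : List ℕ} (hl : l.Pairwise (· ≥ ·)) :
    Hodd l * ∏ i, ∏ t ∈ Ioi i,
        (if Odd (degVec l i - degVec l t) then degVec l i - degVec l t else 1) =
      ∏ i, oddFactorial (degVec l i) := by
  rw [Hodd, ← prod_mul_distrib]
  exact prod_congr rfl fun i _ => prod_hookLen_mul_prod_sub hl i fun h => if Odd h then h else 1

theorem Hodd_mul_prod_dist {l : List ℕ} (hl : l.Pairwise (· ≥ ·)) {q p : ℕ}
    (θ : Fin q ⊕ Fin p ≃ Fin l.length) (a : Fin q → ℕ) (b : Fin p → ℕ)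
    (hθ : ∀ x, degVec l (θ x) = evenOdd a b x) :
    Hodd l * ∏ r, ∏ s, Nat.dist (2 * a r) (2 * b s + 1) = ∏ i, oddFactorial (degVec l i) := by
  have hodd (i t : Fin l.length) (ht : t ∈ Ioi i) :
      (if Odd (degVec l i - degVec l t) then degVec l i - degVec l t else 1) =
        if Odd (degVec l i + degVec l t) then Nat.dist (degVec l i) (degVec l t) else 1 := by
    have hle := (degVec_strictAnti hl (mem_Ioi.mp ht)).le
    simp only [Nat.dist_eq_sub_of_le_right hle, Nat.odd_sub hle, Nat.odd_add]
  rw [← Hodd_mul_prod_odd_sub hl, prod_congr rfl fun i _ => prod_congr rfl (hodd i),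
    prod_prod_Ioi_sumEquiv θ
      (fun i t => if Odd (degVec l i + degVec l t) then Nat.dist (degVec l i) (degVec l t) else 1)
      fun i t => by rw [add_comm, Nat.dist_comm]]
  simp [hθ, evenOdd, Nat.even_add, ← Nat.not_even_iff_odd]

/-! ### Coefficients of Wronskians -/

section Wronskian

variable {R : Type*} [CommRing R] {n : ℕ}

theorem det_descFactorial (v : Fin n → ℕ) :
    (Matrix.of fun i j : Fin n => ((v i).descFactorial j : R)).det =
      (Matrix.vandermonde fun i => (v i : R)).det := by
  have hint := Matrix.det_eval_matrixOfPolynomials_eq_det_vandermonde (fun i => (v i : ℤ))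
    (fun i => descPochhammer ℤ i) (fun i => descPochhammer_natDegree ℤ i)
    fun i => monic_descPochhammer ℤ i
  simp only [descPochhammer_eval_eq_descFactorial] at hint
  have hmap := congrArg (Int.castRingHom R) hint.symm
  simp only [RingHom.map_det] at hmap
  convert hmap using 2 <;> ext i j <;> simp [Matrix.vandermonde_apply]

/-- The Wronskian determinant of a tuple of polynomials. -/
noncomputable def wronskianDet (P : Fin n → R[X]) : R[X] :=
  (Matrix.of fun i j : Fin n => derivative^[(i : ℕ)] (P j)).det

theorem map_wronskianDet {S : Type*} [CommRing S] (f : R →+* S) (P : Fin n → R[X]) :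
    (wronskianDet P).map f = wronskianDet fun j => (P j).map f := by
  rw [wronskianDet, wronskianDet, ← coe_mapRingHom, RingHom.map_det]
  congr 1
  ext i j : 2
  simp [iterate_derivative_map]

theorem X_pow_mul_iterate_derivative (p : R[X]) (i : ℕ) :
    X ^ i * derivative^[i] p =
      ∑ e ∈ p.support, C (p.coeff e) * X ^ e * (e.descFactorial i : R[X]) := by
  conv_lhs => rw [p.as_sum_support_C_mul_X_pow]
  rw [iterate_derivative_sum, mul_sum]
  refine sum_congr rfl fun e _ => ?_
  rw [iterate_derivative_C_mul, iterate_derivative_X_pow_eq_natCast_mul]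
  rcases lt_or_ge e i with h | h
  · simp [Nat.descFactorial_of_lt h]
  · rw [← Nat.add_sub_of_le h, Nat.add_sub_cancel_left, pow_add]
    ring

theorem X_pow_mul_wronskianDet (P : Fin n → R[X]) :
    X ^ (∑ i : Fin n, (i : ℕ)) * wronskianDet P =
      ∑ f ∈ Fintype.piFinset fun j => (P j).support,
        C ((∏ j, (P j).coeff (f j)) * (Matrix.vandermonde fun j => (f j : R)).det) *
          X ^ ∑ j, f j := by
  have hrows : X ^ (∑ i : Fin n, (i : ℕ)) * wronskianDet P =
      Matrix.detRowAlternating fun j : Fin n => ∑ e ∈ (P j).support,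
        fun i : Fin n => C ((P j).coeff e) * X ^ e * (e.descFactorial i : R[X]) := by
    rw [← prod_pow_eq_pow_sum, wronskianDet, ← Matrix.det_mul_column, ← Matrix.det_transpose]
    refine congrArg Matrix.det (Matrix.ext fun j i => ?_)
    simp [X_pow_mul_iterate_derivative]
  rw [hrows, ← AlternatingMap.coe_multilinearMap, MultilinearMap.map_sum_finset]
  refine sum_congr rfl fun f _ => ?_
  have hdet := Matrix.det_mul_column (fun j => C ((P j).coeff (f j)) * X ^ f j)
    (Matrix.of fun j i : Fin n => ((f j).descFactorial i : R[X]))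
  have hvand : (Matrix.vandermonde fun j => (f j : R[X])).det =
      C (Matrix.vandermonde fun j => (f j : R)).det := by
    simp [Matrix.det_vandermonde]
  refine hdet.trans ?_
  rw [det_descFactorial, hvand, prod_mul_distrib, prod_pow_eq_pow_sum, C_mul, map_prod]
  ring

theorem coeff_wronskianDet (P : Fin n → R[X]) (m : ℕ) :
    (wronskianDet P).coeff m =
      ∑ f ∈ Fintype.piFinset (fun j => (P j).support) with ∑ j, f j = m + ∑ i : Fin n, (i : ℕ),
        (∏ j, (P j).coeff (f j)) * (Matrix.vandermonde fun j => (f j : R)).det := by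
  rw [← coeff_X_pow_mul, X_pow_mul_wronskianDet, finsetSum_coeff, sum_filter]
  simp only [coeff_C_mul_X_pow, eq_comm]

theorem coeff_wronskianDet_eq_mul (P : Fin n → R[X]) {e : Fin n → ℕ} (he : Function.Injective e)
    {m : ℕ} (hm : m + ∑ i : Fin n, (i : ℕ) = ∑ k, e k)
    (huniq : ∀ f : Fin n → ℕ, Function.Injective f → (∀ j, (P j).coeff (f j) ≠ 0) →
      ∑ j, f j = ∑ k, e k → ∃ σ : Equiv.Perm (Fin n), f = e ∘ σ) :
    (wronskianDet P).coeff m =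
      (Matrix.vandermonde fun k => (e k : R)).det *
        (Matrix.of fun k j => (P j).coeff (e k)).det := by
  set F : (Fin n → ℕ) → R := fun f =>
    (∏ j, (P j).coeff (f j)) * (Matrix.vandermonde fun j => (f j : R)).det with hF
  have hleibniz : (Matrix.vandermonde fun k => (e k : R)).det *
      (Matrix.of fun k j => (P j).coeff (e k)).det = ∑ σ : Equiv.Perm (Fin n), F (e ∘ σ) := by
    rw [Matrix.det_apply' (Matrix.of _), mul_sum]
    refine sum_congr rfl fun σ _ => ?_
    have hperm : (Matrix.vandermonde fun j => (e (σ j) : R)).det =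
        Equiv.Perm.sign σ * (Matrix.vandermonde fun k => (e k : R)).det :=
      Matrix.det_permute σ (Matrix.vandermonde fun k => (e k : R))
    simp only [hF, Matrix.of_apply, Function.comp_apply, hperm]
    ring
  have hcoeff {f : Fin n → ℕ} (hf : F f ≠ 0) (j : Fin n) : (P j).coeff (f j) ≠ 0 := fun hj =>
    left_ne_zero_of_mul hf (prod_eq_zero (mem_univ j) hj)
  have hinj {f : Fin n → ℕ} (hf : F f ≠ 0) : Function.Injective f := by
    intro i j hij
    by_contra hne
    refine right_ne_zero_of_mul hf (Matrix.det_zero_of_row_eq hne ?_)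
    ext k
    simp [Matrix.vandermonde_apply, hij]
  rw [hleibniz, coeff_wronskianDet, hm]
  symm
  refine sum_bij_ne_zero (fun σ _ _ => e ∘ σ) (fun σ _ hσ => ?_)
    (fun σ _ _ τ _ _ h => DFunLike.coe_injective (he.comp_left h)) (fun f hf hne => ?_)
    fun _ _ _ => rfl
  · simpa [Equiv.sum_comp σ e] using hcoeff hσ
  · obtain ⟨σ, rfl⟩ := huniq f (hinj hne) (hcoeff hne) (mem_filter.mp hf).2
    exact ⟨σ, mem_univ σ, hne, rfl⟩

end Wronskian

/-! ### Exponents of prescribed parity -/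

theorem evenOdd_injective_iff {α β : Type*} {a : α → ℕ} {b : β → ℕ} :
    Function.Injective (evenOdd a b) ↔ Function.Injective a ∧ Function.Injective b := by
  refine ⟨fun h => ⟨fun r r' hr => ?_, fun s s' hs => ?_⟩, fun ⟨ha, hb⟩ => ?_⟩
  · exact Sum.inl_injective (h (by simp [evenOdd, hr]))
  · exact Sum.inr_injective (h (by simp [evenOdd, hs]))
  · refine Function.Injective.sumElim ?_ ?_ fun r s => by lia
    · exact (mul_right_injective₀ two_ne_zero).comp ha
    · exact (add_left_injective 1).comp ((mul_right_injective₀ two_ne_zero).comp hb)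

theorem exists_eq_evenOdd {α β : Type*} {f : α ⊕ β → ℕ} (hl : ∀ r, Even (f (.inl r)))
    (hr : ∀ s, Odd (f (.inr s))) : ∃ a b, f = evenOdd a b := by
  choose a ha using fun r => (hl r).exists_two_nsmul
  choose b hb using hr
  exact ⟨a, b, by ext (r | s) <;> simp [evenOdd, ha, hb]⟩

theorem minExponents_injective (q p : ℕ) : Function.Injective (minExponents q p) :=
  evenOdd_injective_iff.mpr ⟨Fin.val_injective, Fin.val_injective⟩

theorem exists_perm_val_le {q : ℕ} {u : Fin q → ℕ} (hu : Function.Injective u) :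
    ∃ τ : Equiv.Perm (Fin q), ∀ i : Fin q, (i : ℕ) ≤ u (τ i) := by
  have hsort : StrictMono (u ∘ Tuple.sort u) :=
    (Tuple.monotone_sort u).strictMono_of_injective (hu.comp (Equiv.injective _))
  refine ⟨Tuple.sort u, fun i => ?_⟩
  have hmaps : Set.MapsTo (u ∘ Tuple.sort u) (Iio i) (range (u (Tuple.sort u i))) := fun j hj =>
    mem_coe.mpr (mem_range.mpr (hsort (mem_Iio.mp (mem_coe.mp hj))))
  simpa using card_le_card_of_injOn _ hmaps hsort.injective.injOn

theorem sum_val_le_sum {q : ℕ} {u : Fin q → ℕ} (hu : Function.Injective u) :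
    ∑ i : Fin q, (i : ℕ) ≤ ∑ i, u i := by
  obtain ⟨τ, hτ⟩ := exists_perm_val_le hu
  exact (sum_le_sum fun i _ => hτ i).trans_eq (Equiv.sum_comp τ u)

theorem exists_perm_eq_val {q : ℕ} {u : Fin q → ℕ} (hu : Function.Injective u)
    (hsum : ∑ i, u i = ∑ i : Fin q, (i : ℕ)) :
    ∃ σ : Equiv.Perm (Fin q), ∀ i, u i = σ i := by
  obtain ⟨τ, hτ⟩ := exists_perm_val_le hu
  have heq := (sum_eq_sum_iff_of_le fun i _ => hτ i).mp (hsum.symm.trans (Equiv.sum_comp τ u).symm)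
  exact ⟨τ.symm, fun i => by simpa using (heq (τ.symm i) (mem_univ _)).symm⟩

theorem exists_perm_eq_minExponents {q p : ℕ} {f : Fin q ⊕ Fin p → ℕ} (hf : Function.Injective f)
    (hpar : ∀ x, Even (f x + minExponents q p x)) (hsum : ∑ x, f x = ∑ x, minExponents q p x) :
    ∃ σ : Equiv.Perm (Fin q ⊕ Fin p), ∀ x, f x = minExponents q p (σ x) := by
  obtain ⟨u, w, rfl⟩ := exists_eq_evenOdd (f := f)
    (fun r => by simpa [minExponents, evenOdd, parity_simps] using hpar (.inl r))
    (fun s => by simpa [minExponents, evenOdd, parity_simps] using hpar (.inr s))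
  obtain ⟨hu, hw⟩ := evenOdd_injective_iff.mp hf
  have hu_le := sum_val_le_sum hu
  have hw_le := sum_val_le_sum hw
  simp only [minExponents, evenOdd, Fintype.sum_sum_type, Sum.elim_inl, Sum.elim_inr,
    sum_add_distrib, ← mul_sum] at hsum
  obtain ⟨σ, hσ⟩ := exists_perm_eq_val hu (by lia)
  obtain ⟨τ, hτ⟩ := exists_perm_eq_val hw (by lia)
  exact ⟨Equiv.sumCongr σ τ, by rintro (r | s) <;> simp [minExponents, evenOdd, hσ, hτ]⟩

theorem vandermondeAbs_eq_mul_prod_dist {q p n : ℕ} (θ : Fin q ⊕ Fin p ≃ Fin n) {v : Fin n → ℕ}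
    {a : Fin q → ℕ} {b : Fin p → ℕ} (hv : ∀ x, v (θ x) = evenOdd a b x) :
    vandermondeAbs v = vandermondeAbs (fun r => 2 * a r) * vandermondeAbs (fun s => 2 * b s + 1) *
      ∏ r, ∏ s, Nat.dist (2 * a r) (2 * b s + 1) := by
  rw [vandermondeAbs, prod_prod_Ioi_sumEquiv θ _ fun i j => Nat.dist_comm _ _]
  simp [hv, evenOdd, vandermondeAbs]

theorem coeff_wronskianDet_of_parity {R : Type*} [CommRing R] {q p n : ℕ}
    (θ : Fin q ⊕ Fin p ≃ Fin n) (P : Fin n → R[X])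
    (hP : ∀ x t, Odd (t + minExponents q p x) → (P (θ x)).coeff t = 0) :
    (wronskianDet P).coeff (staircaseIndex q p * (staircaseIndex q p + 1) / 2) =
      (Matrix.vandermonde fun k => (minExponents q p (θ.symm k) : R)).det *
        ((Matrix.of fun r i : Fin q => (P (θ (.inl i))).coeff (2 * r)).det *
          (Matrix.of fun s j : Fin p => (P (θ (.inr j))).coeff (2 * s + 1)).det) := by
  have hn : q + p = n := by simpa using Fintype.card_congr θ
  have hsum : ∑ k, minExponents q p (θ.symm k) = ∑ x, minExponents q p x := Equiv.sum_comp θ.symm _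
  rw [coeff_wronskianDet_eq_mul P (e := minExponents q p ∘ θ.symm)
    ((minExponents_injective q p).comp θ.symm.injective)]
  · congr 1
    rw [← Matrix.det_submatrix_equiv_self θ, ← Matrix.det_fromBlocks_zero₁₂ _ 0]
    congr 1
    ext (i | i) (j | j)
    · simp [minExponents, evenOdd]
    · simpa [minExponents, evenOdd] using
        hP (.inr j) (2 * i) (by simp [minExponents, evenOdd, parity_simps])
    · simpa [minExponents, evenOdd] using
        hP (.inl j) (2 * i + 1) (by simp [minExponents, evenOdd, parity_simps])
    · simp [minExponents, evenOdd]
  · subst hn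
    rw [sum_minExponents]
    exact hsum.symm
  · intro f hf hcoeff hfsum
    obtain ⟨σ, hσ⟩ := exists_perm_eq_minExponents (f := f ∘ θ) (hf.comp θ.injective)
      (fun x => by
        by_contra hx
        exact hcoeff (θ x) (hP x _ (Nat.not_even_iff_odd.mp hx)))
      ((Equiv.sum_comp θ f).trans (hfsum.trans hsum))
    refine ⟨θ.symm.trans (σ.trans θ), funext fun j => ?_⟩
    simpa using hσ (θ.symm j)

/-! ### Hermite polynomials -/

theorem doubleFactorial_two_mul_sub_one (m : ℕ) : (2 * m - 1)‼ = oddFactorial (2 * m) := by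
  induction m with
  | zero => rfl
  | succ m ih =>
    rw [oddFactorial_two_mul_succ, oddFactorial_two_mul_add_one, ← ih, mul_comm (_ ‼),
      ← Nat.doubleFactorial_add_one]
    rfl

theorem oddFactorial_mul_choose_mul_factorial {ε : ℕ} (hε : ε < 2) (r m : ℕ) :
    oddFactorial (2 * m) * (2 * m + (2 * r + ε)).choose (2 * r + ε) * (2 * r + ε)! =
      oddFactorial (2 * (r + m) + ε) * (2 ^ r * (r + m).descFactorial r) := by
  have hchoose := Nat.add_choose_mul_factorial_mul_factorial (2 * m) (2 * r + ε)
  have hdesc := Nat.factorial_mul_descFactorial (Nat.le_add_right r m)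
  rw [Nat.add_sub_cancel_left] at hdesc
  have hfact := factorial_two_mul_add hε (r + m)
  rw [show 2 * (r + m) + ε = 2 * m + (2 * r + ε) by ring] at hfact ⊢
  rw [hfact, factorial_two_mul, ← hdesc, pow_add] at hchoose
  refine Nat.eq_of_mul_eq_mul_left (by positivity : 0 < 2 ^ m * m !) ?_
  linear_combination hchoose

theorem coeff_hermite_mul_factorial {ε : ℕ} (hε : ε < 2) (a r : ℕ) :
    (hermite (2 * a + ε)).coeff (2 * r + ε) * ((2 * r + ε)! : ℤ) =
      (-1) ^ a * oddFactorial (2 * a + ε) * ((-2) ^ r * a.descFactorial r) := by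
  rcases lt_or_ge a r with har | hra
  · rw [coeff_hermite_of_lt (by lia), Nat.descFactorial_of_lt har]
    simp
  · obtain ⟨m, rfl⟩ := Nat.exists_eq_add_of_le hra
    have hmul := congrArg (Nat.cast : ℕ → ℤ) (oddFactorial_mul_choose_mul_factorial hε r m)
    have hsign : (-1 : ℤ) ^ m = (-1) ^ (r + m) * (-1) ^ r := by
      rw [← pow_add, add_right_comm, pow_add, Even.neg_one_pow ⟨r, rfl⟩, one_mul]
    rw [show 2 * (r + m) + ε = 2 * m + (2 * r + ε) by ring] at hmul ⊢
    rw [coeff_hermite_explicit, doubleFactorial_two_mul_sub_one, hsign, neg_pow 2]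
    push_cast at hmul ⊢
    linear_combination (-1) ^ (r + m) * (-1) ^ r * hmul

theorem abs_det_two_pow_mul_descFactorial {q : ℕ} (ε : ℕ) (a : Fin q → ℕ) :
    |(Matrix.of fun r i : Fin q => (-2) ^ (r : ℕ) * ((a i).descFactorial r : ℤ)).det| =
      vandermondeAbs fun i => 2 * a i + ε := by
  have hscale : (Matrix.vandermonde fun i => ((2 * a i + ε : ℕ) : ℤ)).det =
      (∏ r : Fin q, 2 ^ (r : ℕ)) * (Matrix.vandermonde fun i => (a i : ℤ)).det := by
    push_cast
    rw [Matrix.det_vandermonde_add (fun i => 2 * (a i : ℤ)), ← Matrix.det_mul_row]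
    congr 1
    ext i j
    simp [Matrix.vandermonde_apply, mul_pow]
  have hcolumn := Matrix.det_mul_column (fun r : Fin q => (-2 : ℤ) ^ (r : ℕ))
    (Matrix.of fun i j : Fin q => ((a i).descFactorial j : ℤ)).transpose
  rw [Matrix.det_transpose, det_descFactorial] at hcolumn
  rw [← abs_det_vandermonde_natCast, hscale, abs_mul, abs_prod]
  refine (congrArg abs hcolumn).trans ?_
  simp [abs_mul, abs_prod]

theorem abs_det_coeff_hermite_mul_prod_factorial {ε q : ℕ} (hε : ε < 2) (a : Fin q → ℕ) :
    |(Matrix.of fun r i : Fin q => (hermite (2 * a i + ε)).coeff (2 * r + ε)).det| *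
        ((∏ r : Fin q, (2 * r + ε)! : ℕ) : ℤ) =
      ((∏ i, oddFactorial (2 * a i + ε)) * vandermondeAbs fun i => 2 * a i + ε : ℕ) := by
  have hrow := Matrix.det_mul_row (fun i => (-1) ^ a i * (oddFactorial (2 * a i + ε) : ℤ))
    (Matrix.of fun r i : Fin q => (-2) ^ (r : ℕ) * ((a i).descFactorial r : ℤ))
  have hcolumn := Matrix.det_mul_column (fun r : Fin q => ((2 * r + ε)! : ℤ))
    (Matrix.of fun r i : Fin q => (hermite (2 * a i + ε)).coeff (2 * r + ε))
  simp only [Matrix.of_apply, ← coeff_hermite_mul_factorial hε] at hrow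
  simp only [Matrix.of_apply, mul_comm ((_)! : ℤ), hrow] at hcolumn
  have habs := congrArg abs hcolumn
  rw [abs_mul, abs_mul, abs_det_two_pow_mul_descFactorial ε] at habs
  rw [Nat.cast_mul, Nat.cast_prod, Nat.cast_prod, mul_comm]
  simpa [abs_prod, abs_mul] using habs.symm

theorem prod_factorial_eq_prod_oddFactorial_mul {ε : ℕ} (hε : ε < 2) (q : ℕ) :
    ∏ r : Fin q, (2 * r + ε)! =
      (∏ r : Fin q, oddFactorial (2 * r + ε)) * vandermondeAbs fun r : Fin q => 2 * r + ε := by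
  have hdet := abs_det_coeff_hermite_mul_prod_factorial hε (Fin.val : Fin q → ℕ)
  have htri : (Matrix.of fun r i : Fin q =>
      (hermite (2 * (i : ℕ) + ε)).coeff (2 * r + ε)).IsUpperTriangular := fun r i hir =>
    coeff_hermite_of_lt (by have : (i : ℕ) < r := hir; lia)
  rw [Matrix.det_of_isUpperTriangular htri] at hdet
  simpa only [Matrix.of_apply, coeff_hermite_self, prod_const_one, abs_one, one_mul,
    Nat.cast_inj] using hdet

theorem vandermondeAbs_minExponents_mul_Hstaircase {q p n : ℕ} (θ : Fin q ⊕ Fin p ≃ Fin n) :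
    vandermondeAbs (fun k => minExponents q p (θ.symm k)) * Hstaircase (staircaseIndex q p) =
      (∏ r : Fin q, (2 * r)!) * ∏ s : Fin p, (2 * s + 1)! := by
  rw [vandermondeAbs_eq_mul_prod_dist θ (a := Fin.val) (b := Fin.val) (by simp [minExponents]),
    mul_assoc, prod_dist_mul_Hstaircase, prod_factorial_eq_prod_oddFactorial_mul one_lt_two p]
  have heven := prod_factorial_eq_prod_oddFactorial_mul two_pos q
  simp only [add_zero] at heven
  rw [heven]
  ring

theorem abs_coeff_wronskianDet_hermite_mul_Hstaircase {q p n : ℕ} (θ : Fin q ⊕ Fin p ≃ Fin n)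
    {v : Fin n → ℕ} {a : Fin q → ℕ} {b : Fin p → ℕ} (hv : ∀ x, v (θ x) = evenOdd a b x) :
    |(wronskianDet fun j => hermite (v j)).coeff
        (staircaseIndex q p * (staircaseIndex q p + 1) / 2)| * Hstaircase (staircaseIndex q p) =
      ((∏ j, oddFactorial (v j)) *
        (vandermondeAbs (fun r => 2 * a r) * vandermondeAbs fun s => 2 * b s + 1) : ℕ) := by
  have heven := abs_det_coeff_hermite_mul_prod_factorial two_pos a
  have hodd := abs_det_coeff_hermite_mul_prod_factorial one_lt_two b
  have hmin := congrArg (Nat.cast : ℕ → ℤ) (vandermondeAbs_minExponents_mul_Hstaircase θ)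
  have hparity (x) (t : ℕ) (ht : Odd (t + minExponents q p x)) :
      (hermite (v (θ x))).coeff t = 0 := by
    refine coeff_hermite_of_odd_add ?_
    rw [hv]
    rcases x with r | s
    · simpa [minExponents, evenOdd, Nat.odd_add, parity_simps, ← Nat.not_even_iff_odd] using ht
    · simpa [minExponents, evenOdd, Nat.odd_add, parity_simps] using ht
  rw [coeff_wronskianDet_of_parity θ _ hparity, abs_mul, abs_mul, abs_det_vandermonde_natCast,
    ← θ.prod_comp, Fintype.prod_sum_type]
  simp only [hv, evenOdd, Sum.elim_inl, Sum.elim_inr, add_zero] at heven hodd ⊢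
  push_cast at heven hodd hmin ⊢
  linear_combination
    |(Matrix.of fun r i : Fin q => (hermite (2 * a i)).coeff (2 * r)).det| *
        |(Matrix.of fun s j : Fin p => (hermite (2 * b j + 1)).coeff (2 * s + 1)).det| * hmin +
      congrArg₂ HMul.hMul heven hodd

theorem exists_equiv_degVec_eq_evenOdd (l : List ℕ) :
    ∃ (θ : Fin (evenCount l) ⊕ Fin (oddCount l) ≃ Fin l.length) (a : Fin (evenCount l) → ℕ)
      (b : Fin (oddCount l) → ℕ), ∀ x, degVec l (θ x) = evenOdd a b x := by
  have heven : Fintype.card {i // Even (degVec l i)} = evenCount l := Fintype.card_subtype _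
  have hodd : Fintype.card {i // ¬ Even (degVec l i)} = oddCount l := by
    simp only [Fintype.card_subtype, Nat.not_even_iff_odd, oddCount]
  let θ := ((Fintype.equivFinOfCardEq heven).symm.sumCongr
    (Fintype.equivFinOfCardEq hodd).symm).trans (Equiv.sumCompl _)
  obtain ⟨a, b, hab⟩ := exists_eq_evenOdd (f := degVec l ∘ θ)
    (fun r => ((Fintype.equivFinOfCardEq heven).symm r).2)
    fun s => Nat.not_even_iff_odd.mp ((Fintype.equivFinOfCardEq hodd).symm s).2
  exact ⟨θ, a, b, congrFun hab⟩

theorem vanderQ_eq_intCast_det_vandermonde (l : List ℕ) :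
    vanderQ l = ((Matrix.vandermonde fun i => (degVec l i : ℤ)).det : ℤ) := by
  simp [vanderQ, Matrix.det_vandermonde, ← prod_filter, filter_lt_eq_Ioi]

theorem abs_vanderQ (l : List ℕ) : |vanderQ l| = vandermondeAbs (degVec l) := by
  rw [vanderQ_eq_intCast_det_vandermonde, ← Int.cast_abs, abs_det_vandermonde_natCast,
    Int.cast_natCast]

theorem HeW_eq_C_mul_map_wronskianDet (l : List ℕ) :
    HeW l = C (vanderQ l)⁻¹ *
      (wronskianDet fun j => hermite (degVec l j)).map (Int.castRingHom ℚ) := by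
  rw [map_wronskianDet, HeW, wronskianDet]

theorem abs_coeff_HeW_mul_vandermondeAbs {l : List ℕ} (hne : vandermondeAbs (degVec l) ≠ 0)
    (m : ℕ) :
    |(HeW l).coeff m| * vandermondeAbs (degVec l) =
      (|(wronskianDet fun j => hermite (degVec l j)).coeff m| : ℤ) := by
  rw [HeW_eq_C_mul_map_wronskianDet, coeff_C_mul, coeff_map, abs_mul, abs_inv, abs_vanderQ,
    mul_right_comm, inv_mul_cancel₀ (Nat.cast_ne_zero.mpr hne), one_mul, eq_intCast, Int.cast_abs]

/-- The absolute value of the constant term of the remainder polynomial (i.e. the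
coefficient of `X^{k(k+1)/2}` in `He_λ`) times `H(δ_k)` equals `H_odd(λ)`. -/
theorem abs_remainder_constant_term (l : List ℕ) (hl : IsPartition l) :
    |(HeW l).coeff (coreK l * (coreK l + 1) / 2)| * (Hstaircase (coreK l) : ℚ)
      = (Hodd l : ℚ) := by
  obtain ⟨θ, a, b, hθ⟩ := exists_equiv_degVec_eq_evenOdd l
  have hne := vandermondeAbs_ne_zero (degVec_strictAnti hl.1).injective
  have hwronskian := congrArg (Int.cast : ℤ → ℚ)
    (abs_coeff_wronskianDet_hermite_mul_Hstaircase θ hθ)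
  rw [Int.cast_mul, ← coreK_eq_staircaseIndex, ← abs_coeff_HeW_mul_vandermondeAbs hne,
    ← Hodd_mul_prod_dist hl.1 θ a b hθ] at hwronskian
  have hvandermonde := congrArg (Nat.cast : ℕ → ℚ) (vandermondeAbs_eq_mul_prod_dist θ hθ)
  refine mul_right_cancel₀ (Nat.cast_ne_zero.mpr hne) ?_
  push_cast at hwronskian hvandermonde
  linear_combination hwronskian - (Hodd l : ℚ) * hvandermonde
end

section
/- Let λ be a partition with |λ| ≥ 2. Then the coefficient of X^{|λ|−2} in the Wronskian Hermite polynomial He_λ equals −c(λ), where c(λ) = Σ_{(i,j)∈λ} (j − i) is the sum of the contents of the boxes of the Young diagram of λ. -/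
/-- The content sum `c(λ) = Σ_{(i,j)∈λ} (j − i)`, where the cell in (0-indexed)
row `i` and (1-indexed) column `j` has content `j − (i+1)`. -/
def contentSum (l : List ℕ) : ℤ :=
  ∑ i : Fin l.length, ∑ j ∈ Finset.Icc 1 (l.get i), ((j : ℤ) - ((i : ℕ) + 1))

/-!
Multiplying row `i` of the Wronskian matrix by `X ^ i` and reversing column `j` as a polynomial of
degree `n_j`, the coefficient of `X ^ (|λ| - 2)` becomes the coefficient of `X ^ 2` in the
determinant of a matrix `M`. Write `(x)_i` for the falling factorial. Since
`He_n = X ^ n - (n(n-1)/2) X ^ (n-2) + ⋯` and `n(n-1) (n-2)_i = (n)_{i+2}`, we get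
`M = A - (A₂/2) X ^ 2 + ⋯`, where `A` and `A₂` have entries `(n_j)_i` and `(n_j)_{i+2}`. So the
coefficient is `-tr(adj(A) A₂)/2`.

The recurrence `(x)_{i+1} = (x - i) (x)_i` expresses `A₂` through `A` and the matrix `A₁` with
entries `(n_j)_{i+1}`. Every row of `A₁` but the last is a row of `A`, so `A₁ adj(A)` has at most
one nonzero diagonal entry, and the trace comes out as `det A` times a quadratic symmetric function
of the `n_j`, which is `2 c(λ)`. Finally, `det A` is the Vandermonde determinant.
-/

open Polynomial

section CoefficientsOfDeterminants

variable {ι R : Type*}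

lemma coeff_one_prod_eq_zero [CommSemiring R] {s : Finset ι} {f : ι → R[X]}
    (hf : ∀ i ∈ s, (f i).coeff 1 = 0) : (∏ i ∈ s, f i).coeff 1 = 0 :=
  Finset.prod_induction f (fun p => p.coeff 1 = 0)
    (fun p q hp hq => by simp [mul_coeff_one, hp, hq]) (by simp [coeff_one]) hf

lemma coeff_two_prod_of_coeff_one_eq_zero [CommSemiring R] [DecidableEq ι] {s : Finset ι}
    {f : ι → R[X]} (hf : ∀ i ∈ s, (f i).coeff 1 = 0) :
    (∏ i ∈ s, f i).coeff 2 = ∑ j ∈ s, (f j).coeff 2 * ∏ i ∈ s.erase j, (f i).coeff 0 := by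
  induction s using Finset.induction_on with
  | empty => simp [coeff_one]
  | insert a s ha ih =>
    have hs : ∀ i ∈ s, (f i).coeff 1 = 0 := fun i hi => hf i (Finset.mem_insert_of_mem hi)
    have hcoeff : (f a * ∏ i ∈ s, f i).coeff 2 =
        (f a).coeff 2 * ∏ i ∈ s, (f i).coeff 0 + (f a).coeff 0 * (∏ i ∈ s, f i).coeff 2 := by
      simp [coeff_mul, Finset.Nat.antidiagonal_succ, coeff_one_prod_eq_zero hs, coeff_zero_prod,
        add_comm]
    rw [Finset.prod_insert ha, hcoeff, ih hs, Finset.sum_insert ha, Finset.erase_insert ha,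
      Finset.mul_sum]
    congr 1
    refine Finset.sum_congr rfl fun j hj => ?_
    have haj : a ≠ j := fun h => ha (h ▸ hj)
    rw [Finset.erase_insert_of_ne haj, Finset.prod_insert (by simp [ha])]
    ring

lemma natDegree_prod_le_sum [CommSemiring R] {s : Finset ι} {f : ι → R[X]} {d : ι → ℕ}
    (hf : ∀ i ∈ s, (f i).natDegree ≤ d i) : (∏ i ∈ s, f i).natDegree ≤ ∑ i ∈ s, d i :=
  (natDegree_prod_le s f).trans (Finset.sum_le_sum hf)

lemma reflect_prod [CommSemiring R] {s : Finset ι} {f : ι → R[X]} {d : ι → ℕ}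
    (hf : ∀ i ∈ s, (f i).natDegree ≤ d i) :
    reflect (∑ i ∈ s, d i) (∏ i ∈ s, f i) = ∏ i ∈ s, reflect (d i) (f i) := by
  classical
  induction s using Finset.induction_on with
  | empty => simp
  | insert a s ha ih =>
    have hs : ∀ i ∈ s, (f i).natDegree ≤ d i := fun i hi => hf i (Finset.mem_insert_of_mem hi)
    rw [Finset.prod_insert ha, Finset.sum_insert ha, Finset.prod_insert ha,
      reflect_mul _ _ (hf a (Finset.mem_insert_self a s)) (natDegree_prod_le_sum hs), ih hs]

variable [Fintype ι] [DecidableEq ι] [CommRing R]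

lemma sum_det_updateCol_eq_trace_adjugate_mul (A B : Matrix ι ι R) :
    ∑ j, (A.updateCol j (B.col j)).det = (A.adjugate * B).trace := by
  simp_rw [← Matrix.cramer_apply, Matrix.cramer_eq_adjugate_mulVec]
  rfl

lemma coeff_two_det_of_coeff_one_eq_zero {M : Matrix ι ι R[X]}
    (hM : ∀ i j, (M i j).coeff 1 = 0) :
    M.det.coeff 2 =
      ((M.map fun p => p.coeff 0).adjugate * M.map fun p => p.coeff 2).trace := by
  rw [← sum_det_updateCol_eq_trace_adjugate_mul]
  simp only [Matrix.det_apply, finsetSum_coeff]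
  rw [Finset.sum_comm]
  refine Finset.sum_congr rfl fun σ _ => ?_
  rw [← Finset.smul_sum, coeff_smul, coeff_two_prod_of_coeff_one_eq_zero fun i _ => hM (σ i) i]
  congr 1
  refine Finset.sum_congr rfl fun j _ => ?_
  rw [← Finset.mul_prod_erase Finset.univ _ (Finset.mem_univ j), Matrix.updateCol_self]
  congr 1
  refine Finset.prod_congr rfl fun k hk => ?_
  rw [Matrix.updateCol_ne (Finset.ne_of_mem_erase hk), Matrix.map_apply]

lemma reflect_det {M : Matrix ι ι R[X]} {d : ι → ℕ} (hM : ∀ i j, (M i j).natDegree ≤ d j) :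
    reflect (∑ j, d j) M.det = (Matrix.of fun i j => reflect (d j) (M i j)).det := by
  ext m
  simp only [coeff_reflect, Matrix.det_apply, finsetSum_coeff, coeff_smul, Matrix.of_apply]
  refine Finset.sum_congr rfl fun σ _ => ?_
  rw [← reflect_prod fun i _ => hM (σ i) i, coeff_reflect]

end CoefficientsOfDeterminants

section Wronskian

/-- The Wronskian matrix of `f 0, …, f (n - 1)`, whose row `i` holds the `i`-th derivatives. -/
noncomputable def wronskianMatrix {R : Type*} [Semiring R] {n : ℕ} (f : Fin n → R[X]) :
    Matrix (Fin n) (Fin n) R[X] :=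
  Matrix.of fun i j => derivative^[i] (f j)

lemma coeff_X_pow_mul_iterate_derivative {R : Type*} [Semiring R] (p : R[X]) (i m : ℕ) :
    (X ^ i * derivative^[i] p).coeff m = m.descFactorial i * p.coeff m := by
  rw [coeff_X_pow_mul']
  split_ifs with him
  · rw [coeff_iterate_derivative, Nat.sub_add_cancel him, nsmul_eq_mul]
  · rw [Nat.descFactorial_eq_zero_iff_lt.2 (not_le.1 him), Nat.cast_zero, zero_mul]

lemma natDegree_X_pow_mul_iterate_derivative_le {R : Type*} [Semiring R] (p : R[X]) (i : ℕ) :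
    (X ^ i * derivative^[i] p).natDegree ≤ p.natDegree := by
  refine natDegree_le_iff_coeff_eq_zero.2 fun m hm => ?_
  rw [coeff_X_pow_mul_iterate_derivative, coeff_eq_zero_of_natDegree_lt hm, mul_zero]

variable {R : Type*} [CommRing R] {n : ℕ}

/-- The Wronskian matrix with row `i` multiplied by `X ^ i` and the entries of column `j` reversed
as polynomials of degree `d j`. Its determinant lists the coefficients of the Wronskian of `f` from
the top. -/
noncomputable def reversedWronskianMatrix (d : Fin n → ℕ) (f : Fin n → R[X]) :
    Matrix (Fin n) (Fin n) R[X] :=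
  Matrix.of fun i j => reflect (d j) (X ^ (i : ℕ) * derivative^[i] (f j))

lemma coeff_det_wronskianMatrix {d : Fin n → ℕ} {f : Fin n → R[X]}
    (hf : ∀ j, (f j).natDegree ≤ d j) {m k : ℕ} (hmk : m + k + ∑ i : Fin n, (i : ℕ) = ∑ j, d j) :
    (wronskianMatrix f).det.coeff m = (reversedWronskianMatrix d f).det.coeff k := by
  have hscale : (Matrix.of fun i j : Fin n => X ^ (i : ℕ) * wronskianMatrix f i j).det =
      X ^ (∑ i : Fin n, (i : ℕ)) * (wronskianMatrix f).det := by
    rw [Matrix.det_mul_column, Finset.prod_pow_eq_pow_sum]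
  have hreflect : reflect (∑ j, d j) (X ^ (∑ i : Fin n, (i : ℕ)) * (wronskianMatrix f).det) =
      (reversedWronskianMatrix d f).det := by
    rw [← hscale]
    exact reflect_det fun i j => (natDegree_X_pow_mul_iterate_derivative_le _ _).trans (hf j)
  rw [← hreflect, coeff_reflect, revAt_le (by omega), ← hmk,
    show m + k + ∑ i : Fin n, (i : ℕ) - k = m + ∑ i : Fin n, (i : ℕ) by omega, coeff_X_pow_mul]

end Wronskian

section FallingFactorialMatrix

variable {R : Type*} [CommRing R] {n : ℕ}

lemma trace_mul_diagonal_mul_adjugate {ι : Type*} [Fintype ι] [DecidableEq ι] (A : Matrix ι ι R)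
    (v : ι → R) : (A * Matrix.diagonal v * A.adjugate).trace = A.det * ∑ i, v i := by
  rw [Matrix.trace_mul_cycle, Matrix.adjugate_mul, Matrix.smul_mul, one_mul, Matrix.trace_smul,
    Matrix.trace_diagonal, smul_eq_mul]

lemma trace_diagonal_mul_mul_adjugate {ι : Type*} [Fintype ι] [DecidableEq ι] (A : Matrix ι ι R)
    (v : ι → R) : (Matrix.diagonal v * A * A.adjugate).trace = A.det * ∑ i, v i := by
  rw [mul_assoc, Matrix.mul_adjugate, Matrix.mul_smul, mul_one, Matrix.trace_smul,
    Matrix.trace_diagonal, smul_eq_mul]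

/-- The square matrix of falling factorials `x_j (x_j - 1) ⋯ (x_j - i - k + 1)`; the offset `k`
shifts the rows of the matrix with `k = 0`. -/
noncomputable def fallingFactorialMatrix (x : Fin n → R) (k : ℕ) : Matrix (Fin n) (Fin n) R :=
  Matrix.of fun i j => (descPochhammer R (i + k)).eval (x j)

lemma det_fallingFactorialMatrix_zero [IsDomain R] (x : Fin n → R) :
    (fallingFactorialMatrix x 0).det = (Matrix.vandermonde x).det := by
  rw [Matrix.det_eval_matrixOfPolynomials_eq_det_vandermonde x
    (fun i => descPochhammer R i) (fun i => descPochhammer_natDegree R i)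
    (fun i => monic_descPochhammer R i), ← Matrix.det_transpose]
  rfl

variable (x : Fin n → R)

lemma fallingFactorialMatrix_one : fallingFactorialMatrix x 1 =
    fallingFactorialMatrix x 0 * Matrix.diagonal x -
      Matrix.diagonal (fun i : Fin n => (i : R)) * fallingFactorialMatrix x 0 := by
  ext i j
  simp only [fallingFactorialMatrix, Matrix.of_apply, Matrix.sub_apply, Matrix.mul_diagonal,
    Matrix.diagonal_mul, descPochhammer_succ_eval, add_zero]
  ring

lemma fallingFactorialMatrix_two : fallingFactorialMatrix x 2 =
    fallingFactorialMatrix x 0 * Matrix.diagonal (fun j => x j ^ 2) -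
      Matrix.diagonal (fun i : Fin n => (i : R) ^ 2) * fallingFactorialMatrix x 0 -
        Matrix.diagonal (fun i : Fin n => 2 * (i : R) + 1) * fallingFactorialMatrix x 1 := by
  ext i j
  simp only [fallingFactorialMatrix, Matrix.of_apply, Matrix.sub_apply, Matrix.mul_diagonal,
    Matrix.diagonal_mul, descPochhammer_succ_eval, add_zero, Nat.cast_add,
    Nat.cast_one]
  ring

lemma trace_fallingFactorialMatrix_one_mul_adjugate :
    (fallingFactorialMatrix x 1 * (fallingFactorialMatrix x 0).adjugate).trace =
      (fallingFactorialMatrix x 0).det * ∑ j, (x j - j) := by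
  rw [fallingFactorialMatrix_one, sub_mul, Matrix.trace_sub, trace_mul_diagonal_mul_adjugate,
    trace_diagonal_mul_mul_adjugate, ← mul_sub, Finset.sum_sub_distrib]

lemma fallingFactorialMatrix_one_mul_adjugate_apply_self {i : Fin n} (hi : (i : ℕ) + 1 < n) :
    (fallingFactorialMatrix x 1 * (fallingFactorialMatrix x 0).adjugate) i i = 0 := by
  set A := fallingFactorialMatrix x 0
  have hrow : (fallingFactorialMatrix x 1 * A.adjugate) i i = (A * A.adjugate) ⟨i + 1, hi⟩ i := rfl
  have hne : (⟨i + 1, hi⟩ : Fin n) ≠ i := fun h => by simp [Fin.ext_iff] at h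
  rw [hrow, Matrix.mul_adjugate, Matrix.smul_apply, Matrix.one_apply_ne hne, smul_zero]

lemma trace_diagonal_mul_fallingFactorialMatrix_one_mul_adjugate :
    (Matrix.diagonal (fun i : Fin n => 2 * (i : R) + 1) * fallingFactorialMatrix x 1 *
        (fallingFactorialMatrix x 0).adjugate).trace =
      (2 * n - 1) * ((fallingFactorialMatrix x 0).det * ∑ j, (x j - j)) := by
  rw [← trace_fallingFactorialMatrix_one_mul_adjugate, mul_assoc, Matrix.trace, Matrix.trace,
    Finset.mul_sum]
  refine Finset.sum_congr rfl fun i _ => ?_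
  rw [Matrix.diag_apply, Matrix.diag_apply, Matrix.diagonal_mul]
  rcases (Nat.succ_le_of_lt i.isLt).lt_or_eq with hi | hi
  · rw [fallingFactorialMatrix_one_mul_adjugate_apply_self x hi, mul_zero, mul_zero]
  · have hn : (n : R) = i + 1 := (congrArg Nat.cast hi.symm).trans (Nat.cast_succ _)
    rw [hn]
    ring

theorem trace_adjugate_mul_fallingFactorialMatrix_two :
    ((fallingFactorialMatrix x 0).adjugate * fallingFactorialMatrix x 2).trace =
      (fallingFactorialMatrix x 0).det *
        ∑ j, ((x j ^ 2 - (j : R) ^ 2) - (2 * n - 1) * (x j - j)) := by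
  rw [Matrix.trace_mul_comm, fallingFactorialMatrix_two, sub_mul, sub_mul, Matrix.trace_sub,
    Matrix.trace_sub, trace_mul_diagonal_mul_adjugate, trace_diagonal_mul_mul_adjugate,
    trace_diagonal_mul_fallingFactorialMatrix_one_mul_adjugate, Finset.sum_sub_distrib,
    Finset.sum_sub_distrib, Finset.sum_sub_distrib, ← Finset.mul_sum, Finset.sum_sub_distrib]
  ring

end FallingFactorialMatrix

section Hermite

/-- The Hermite polynomial `He_n` over `ℚ`. -/
noncomputable def hermiteRat (n : ℕ) : ℚ[X] :=
  (hermite n).map (Int.castRingHom ℚ)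

lemma coeff_hermiteRat (n k : ℕ) : (hermiteRat n).coeff k = ((hermite n).coeff k : ℚ) :=
  coeff_map (Int.castRingHom ℚ) k

lemma natDegree_hermiteRat (n : ℕ) : (hermiteRat n).natDegree = n :=
  ((hermite_monic n).natDegree_map _).trans natDegree_hermite

lemma coeff_zero_reflect_iterate_derivative_hermiteRat (n i : ℕ) :
    (reflect (R := ℚ) n (X ^ i * derivative^[i] (hermiteRat n))).coeff 0 = n.descFactorial i := by
  rw [coeff_reflect, revAt_zero, coeff_X_pow_mul_iterate_derivative, coeff_hermiteRat,
    coeff_hermite_self, Int.cast_one, mul_one]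

lemma coeff_one_reflect_iterate_derivative_hermiteRat (n i : ℕ) :
    (reflect (R := ℚ) n (X ^ i * derivative^[i] (hermiteRat n))).coeff 1 = 0 := by
  rw [coeff_reflect, coeff_X_pow_mul_iterate_derivative, coeff_hermiteRat]
  rcases n with _ | n
  · simp [revAt, coeff_one]
  · rw [revAt_le (by omega), coeff_hermite_of_odd_add ⟨n, by omega⟩, Int.cast_zero, mul_zero]

lemma coeff_hermite_add_two (n : ℕ) : (hermite (n + 2)).coeff n = -(Nat.choose (n + 2) 2 : ℤ) := by
  have h := coeff_hermite_explicit 1 n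
  rw [mul_one, add_comm 2 n, Nat.choose_symm_add] at h
  simpa using h

lemma coeff_two_reflect_iterate_derivative_hermiteRat (n i : ℕ) :
    (reflect (R := ℚ) n (X ^ i * derivative^[i] (hermiteRat n))).coeff 2 =
      -(1 / 2) * n.descFactorial (i + 2) := by
  rw [coeff_reflect, coeff_X_pow_mul_iterate_derivative, coeff_hermiteRat]
  -- `reflect n` fixes exponents above `n`, so for `n < 2` this is the original coefficient of `X²`.
  rcases n with _ | _ | n
  · simp [revAt, coeff_one]
  · simp [revAt, coeff_X]
  · rw [revAt_le (by omega), Nat.add_sub_cancel (n := n) (m := 2), coeff_hermite_add_two,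
      Nat.succ_descFactorial_succ, Nat.succ_descFactorial_succ]
    push_cast [Nat.cast_choose_two]
    ring

theorem coeff_det_wronskianMatrix_hermiteRat {n : ℕ} {d : Fin n → ℕ} {m : ℕ}
    (hm : m + 2 + ∑ i : Fin n, (i : ℕ) = ∑ j, d j) :
    (wronskianMatrix fun j => hermiteRat (d j)).det.coeff m =
      -(1 / 2) * ((Matrix.vandermonde fun j => (d j : ℚ)).det *
        ∑ j : Fin n, (((d j : ℚ) ^ 2 - (j : ℚ) ^ 2) - (2 * n - 1) * (d j - j))) := by
  set x : Fin n → ℚ := fun j => d j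
  set M := reversedWronskianMatrix d fun j => hermiteRat (d j)
  have hM₀ : M.map (fun p => p.coeff 0) = fallingFactorialMatrix x 0 := by
    ext i j
    exact (coeff_zero_reflect_iterate_derivative_hermiteRat (d j) i).trans
      (descPochhammer_eval_eq_descFactorial ℚ (d j) i).symm
  have hM₁ : ∀ i j, (M i j).coeff 1 = 0 := fun i j =>
    coeff_one_reflect_iterate_derivative_hermiteRat (d j) i
  have hM₂ : M.map (fun p => p.coeff 2) = (-(1 / 2) : ℚ) • fallingFactorialMatrix x 2 := by
    ext i j
    exact (coeff_two_reflect_iterate_derivative_hermiteRat (d j) i).trans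
      (congrArg _ (descPochhammer_eval_eq_descFactorial ℚ (d j) (i + 2)).symm)
  rw [coeff_det_wronskianMatrix (fun j => (natDegree_hermiteRat (d j)).le) hm,
    coeff_two_det_of_coeff_one_eq_zero hM₁, hM₀, hM₂, Matrix.mul_smul, Matrix.trace_smul,
    trace_adjugate_mul_fallingFactorialMatrix_two, det_fallingFactorialMatrix_zero, smul_eq_mul]

end Hermite

section DegreeVector

lemma degVec_eq_get_add_rev (l : List ℕ) (i : Fin l.length) : degVec l i = l.get i + i.rev := by
  rw [degVec, Fin.val_rev, Nat.sub_sub, add_comm 1]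

lemma sum_comp_rev {M : Type*} [AddCommMonoid M] {n : ℕ} (f : Fin n → M) :
    ∑ i : Fin n, f i.rev = ∑ i, f i :=
  Equiv.sum_comp Fin.revPerm f

lemma sum_degVec (l : List ℕ) : ∑ j, degVec l j = l.sum + ∑ i : Fin l.length, (i : ℕ) := by
  simp_rw [degVec_eq_get_add_rev, Finset.sum_add_distrib]
  rw [sum_comp_rev fun i : Fin l.length => (i : ℕ)]
  exact congrArg (· + _) (Fin.sum_univ_getElem l)

lemma degVec_injective_of_pairwise_ge {l : List ℕ} (hl : l.Pairwise (· ≥ ·)) :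
    Function.Injective (degVec l) := by
  have hanti : StrictAnti (degVec l) := fun i j hij => by
    rw [degVec_eq_get_add_rev, degVec_eq_get_add_rev]
    exact add_lt_add_of_le_of_lt (List.pairwise_iff_get.1 hl i j hij) (Fin.rev_lt_rev.2 hij)
  exact hanti.injective

lemma vanderQ_eq_det_vandermonde (l : List ℕ) :
    vanderQ l = (Matrix.vandermonde fun j => (degVec l j : ℚ)).det := by
  rw [Matrix.det_vandermonde, vanderQ]
  refine Finset.prod_congr rfl fun i _ => ?_
  rw [← Finset.prod_filter]
  exact Finset.prod_congr (by ext j; simp) fun _ _ => rfl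

lemma vanderQ_ne_zero {l : List ℕ} (hl : Function.Injective (degVec l)) : vanderQ l ≠ 0 := by
  rw [vanderQ_eq_det_vandermonde, Matrix.det_vandermonde_ne_zero_iff]
  exact Nat.cast_injective.comp hl

lemma two_mul_sum_row_content (a i : ℕ) :
    2 * ∑ j ∈ Finset.Icc 1 a, ((j : ℤ) - (i + 1)) = (a : ℤ) ^ 2 - (2 * i + 1) * a := by
  induction a with
  | zero => simp
  | succ a ih =>
    rw [Finset.sum_Icc_succ_top (by omega), mul_add, ih]
    push_cast
    ring

theorem two_mul_contentSum (l : List ℕ) :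
    2 * contentSum l = ∑ j : Fin l.length,
      (((degVec l j : ℤ) ^ 2 - (j : ℤ) ^ 2) - (2 * l.length - 1) * (degVec l j - j)) := by
  have hrow (i : Fin l.length) : 2 * ∑ j ∈ Finset.Icc 1 (l.get i), ((j : ℤ) - ((i : ℕ) + 1)) =
      ((degVec l i : ℤ) ^ 2 - (2 * l.length - 1) * degVec l i) -
        ((i.rev : ℤ) ^ 2 - (2 * l.length - 1) * i.rev) := by
    have hrev : (i.rev : ℤ) = l.length - (i + 1) := by rw [Fin.val_rev]; omega
    rw [two_mul_sum_row_content, degVec_eq_get_add_rev, Nat.cast_add, hrev]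
    ring
  rw [contentSum, Finset.mul_sum, Finset.sum_congr rfl fun i _ => hrow i, Finset.sum_sub_distrib,
    sum_comp_rev fun i : Fin l.length => (i : ℤ) ^ 2 - (2 * l.length - 1) * (i : ℤ),
    ← Finset.sum_sub_distrib]
  exact Finset.sum_congr rfl fun j _ => by ring

end DegreeVector

theorem wronskianHermite_subleading_coeff_general (l : List ℕ)
    (hl : Function.Injective (degVec l)) (h2 : 2 ≤ l.sum) :
    (HeW l).coeff (l.sum - 2) = -(contentSum l : ℚ) := by
  have hW : HeW l =
      C (vanderQ l)⁻¹ * (wronskianMatrix fun j => hermiteRat (degVec l j)).det := rfl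
  have hdeg : l.sum - 2 + 2 + ∑ i : Fin l.length, (i : ℕ) = ∑ j, degVec l j := by
    rw [Nat.sub_add_cancel h2, sum_degVec]
  have hcontent := congrArg (Int.cast : ℤ → ℚ) (two_mul_contentSum l)
  push_cast at hcontent
  rw [hW, coeff_C_mul, coeff_det_wronskianMatrix_hermiteRat hdeg, ← hcontent,
    ← vanderQ_eq_det_vandermonde]
  field_simp [vanderQ_ne_zero hl]

/-- The subleading coefficient of the remainder polynomial:
`coeff_{|λ|−2}(He_λ) = −c(λ)`. -/
theorem wronskianHermite_subleading_coeff (l : List ℕ) (hl : IsPartition l)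
    (h2 : 2 ≤ l.sum) :
    (HeW l).coeff (l.sum - 2) = -(contentSum l : ℚ) :=
  wronskianHermite_subleading_coeff_general l (degVec_injective_of_pairwise_ge hl.1) h2
end
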